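/- Let n ≥ 2, let α ∈ UVP_n, and let u, v be elements of the subgroup ⟨λ_{n−1,n}, λ_{n,n−1}⟩ of UVP_n. Then α and α·[u,v] are fused Markov equivalent, where [u,v] = u^{−1}v^{−1}uv. -/

import Mathlib

/-!  Common setup: the unrestricted virtual braid group `UVB n`, its generators
σ_k, ρ_k (1-based indices), the elements λ_{i,j} and B_{i,j}, the permutation
homomorphism ι (characterized by `IsIota`), the section s : S_n → UVB n
(characterized by `IsPermSection`), and fused Markov equivalence. -/

/-- Generators of the unrestricted virtual braid group `UVB n`:
`Sum.inl i` is the classical generator σ_{i+1} and `Sum.inr i` is the virtual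
generator ρ_{i+1}, for `i : Fin (n-1)` (so the 1-based indices are `1, …, n-1`). -/
abbrev UVBGen (n : ℕ) := Sum (Fin (n - 1)) (Fin (n - 1))

namespace UVBGen
def sg {n : ℕ} (i : Fin (n - 1)) : FreeGroup (UVBGen n) := FreeGroup.of (Sum.inl i)
def rg {n : ℕ} (i : Fin (n - 1)) : FreeGroup (UVBGen n) := FreeGroup.of (Sum.inr i)
end UVBGen

open UVBGen in
/-- The defining relations of the unrestricted virtual braid group. -/
def uvbRels (n : ℕ) : Set (FreeGroup (UVBGen n)) :=
  {r | (∃ i j : Fin (n - 1), (j : ℕ) = (i : ℕ) + 1 ∧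
          (r = sg i * sg j * sg i * (sg j * sg i * sg j)⁻¹ ∨
           r = rg i * rg j * rg i * (rg j * rg i * rg j)⁻¹ ∨
           r = rg i * rg j * sg i * (sg j * rg i * rg j)⁻¹ ∨
           r = rg i * sg j * sg i * (sg j * sg i * rg j)⁻¹ ∨
           r = rg j * sg i * sg j * (sg i * sg j * rg i)⁻¹)) ∨
       (∃ i j : Fin (n - 1), ((i : ℕ) + 2 ≤ (j : ℕ) ∨ (j : ℕ) + 2 ≤ (i : ℕ)) ∧
          (r = sg i * sg j * (sg j * sg i)⁻¹ ∨
           r = rg i * rg j * (rg j * rg i)⁻¹ ∨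
           r = sg i * rg j * (rg j * sg i)⁻¹)) ∨
       (∃ i : Fin (n - 1), r = rg i * rg i)}

/-- The unrestricted virtual braid group on `n` strands. -/
abbrev UVB (n : ℕ) := PresentedGroup (uvbRels n)

namespace UVB

/-- The generator σ_k (1-based index; meaningful for `1 ≤ k ≤ n-1`, junk value `1` otherwise). -/
def sigma (n k : ℕ) : UVB n :=
  if h : 1 ≤ k ∧ k ≤ n - 1 then PresentedGroup.of (Sum.inl ⟨k - 1, by omega⟩) else 1

/-- The generator ρ_k (1-based index; meaningful for `1 ≤ k ≤ n-1`, junk value `1` otherwise). -/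
def rho (n k : ℕ) : UVB n :=
  if h : 1 ≤ k ∧ k ≤ n - 1 then PresentedGroup.of (Sum.inr ⟨k - 1, by omega⟩) else 1

/-- The element λ_{i,j} of `UVB n` (1-based indices `1 ≤ i ≠ j ≤ n`; junk value `1` if `i = j`).
For `i < j`:  `λ_{i,j} = ρ_{j-1}⋯ρ_{i+1} · ρ_i σ_i⁻¹ · ρ_{i+1}⋯ρ_{j-1}` and
`λ_{j,i} = ρ_{j-1}⋯ρ_{i+1} · σ_i⁻¹ ρ_i · ρ_{i+1}⋯ρ_{j-1}`. -/
def lam (n i j : ℕ) : UVB n :=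
  if i < j then
    (((List.range' (i + 1) (j - 1 - i)).reverse.map (rho n)).prod) *
      (rho n i * (sigma n i)⁻¹) *
      (((List.range' (i + 1) (j - 1 - i)).map (rho n)).prod)
  else if j < i then
    (((List.range' (j + 1) (i - 1 - j)).reverse.map (rho n)).prod) *
      ((sigma n j)⁻¹ * rho n j) *
      (((List.range' (j + 1) (i - 1 - j)).map (rho n)).prod)
  else 1

/-- The element `B_{i,j} = ρ_{j-1}ρ_{j-2}⋯ρ_{i+1}ρ_i` for `i < j`, and `1` otherwise. -/
def B (n i j : ℕ) : UVB n :=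
  if i < j then ((List.range' i (j - i)).reverse.map (rho n)).prod else 1

/-- The subgroup `U_j` of `UVB n` generated by `{λ_{i,j}, λ_{j,i} : 1 ≤ i < j}`. -/
def U (n j : ℕ) : Subgroup (UVB n) :=
  Subgroup.closure {x | ∃ i, 1 ≤ i ∧ i < j ∧ (x = lam n i j ∨ x = lam n j i)}

end UVB

/-- `ι : UVB n →* S_n` is the homomorphism sending σ_k and ρ_k to the
transposition (k, k+1) (written 0-based on `Fin n`). -/
def IsIota (n : ℕ) (ι : UVB n →* Equiv.Perm (Fin n)) : Prop :=
  ∀ (k : ℕ) (h1 : 1 ≤ k) (h2 : k ≤ n - 1),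
    ι (UVB.sigma n k) = Equiv.swap ⟨k - 1, by omega⟩ ⟨k, by omega⟩ ∧
    ι (UVB.rho n k) = Equiv.swap ⟨k - 1, by omega⟩ ⟨k, by omega⟩

/-- `s : S_n →* UVB n` is the homomorphism sending the transposition (k, k+1) to ρ_k. -/
def IsPermSection (n : ℕ) (s : Equiv.Perm (Fin n) →* UVB n) : Prop :=
  ∀ (k : ℕ) (h1 : 1 ≤ k) (h2 : k ≤ n - 1),
    s (Equiv.swap ⟨k - 1, by omega⟩ ⟨k, by omega⟩) = UVB.rho n k

/-- The number of orbits of a permutation of `Fin n`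
(= number of fixed points + number of nontrivial cycles). -/
def numOrbits {n : ℕ} (π : Equiv.Perm (Fin n)) : ℕ :=
  (Finset.univ.filter fun x => π x = x).card + π.cycleType.card

namespace UVB

private def embedGen (n : ℕ) : UVBGen n → UVBGen (n + 1)
  | Sum.inl i => Sum.inl ⟨i.val, by have := i.isLt; omega⟩
  | Sum.inr i => Sum.inr ⟨i.val, by have := i.isLt; omega⟩

open UVBGen in
/-- The natural inclusion `UVB n →* UVB (n+1)` (σ_k ↦ σ_k, ρ_k ↦ ρ_k). -/
def incl (n : ℕ) : UVB n →* UVB (n + 1) :=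
  PresentedGroup.toGroup (f := fun x => PresentedGroup.of (embedGen n x)) (by
    have key : (FreeGroup.lift fun x => (PresentedGroup.of (embedGen n x) : UVB (n + 1)))
        = (PresentedGroup.mk (uvbRels (n + 1))).comp (FreeGroup.map (embedGen n)) := by
      ext x
      simp [PresentedGroup.of]
    intro r hr
    rw [key]
    simp only [MonoidHom.comp_apply]
    have hmem : FreeGroup.map (embedGen n) r ∈ uvbRels (n + 1) := by
      have hsg : ∀ i : Fin (n - 1), FreeGroup.map (embedGen n) (sg i)
          = sg (⟨i.val, by have := i.isLt; omega⟩ : Fin (n + 1 - 1)) := by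
        intro i; simp [sg, embedGen]
      have hrg : ∀ i : Fin (n - 1), FreeGroup.map (embedGen n) (rg i)
          = rg (⟨i.val, by have := i.isLt; omega⟩ : Fin (n + 1 - 1)) := by
        intro i; simp [rg, embedGen]
      rcases hr with ⟨i, j, hij, hc⟩ | ⟨i, j, hij, hc⟩ | ⟨i, hc⟩
      · refine Or.inl ⟨⟨i.val, by have := i.isLt; omega⟩, ⟨j.val, by have := j.isLt; omega⟩,
          by simpa using hij, ?_⟩
        rcases hc with h | h | h | h | h <;> subst h <;>
          simp only [map_mul, map_inv, hsg, hrg] <;> tauto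
      · refine Or.inr (Or.inl ⟨⟨i.val, by have := i.isLt; omega⟩, ⟨j.val, by have := j.isLt; omega⟩,
          by simpa using hij, ?_⟩)
        rcases hc with h | h | h <;> subst h <;>
          simp only [map_mul, map_inv, hsg, hrg] <;> tauto
      · refine Or.inr (Or.inr ⟨⟨i.val, by have := i.isLt; omega⟩, ?_⟩)
        subst hc
        simp only [map_mul, hsg, hrg]
    exact (QuotientGroup.eq_one_iff _).mpr (Subgroup.subset_normalClosure hmem))

end UVB

/-- The elementary fused Markov moves on the disjoint union of the groups `UVB n`:
conjugation, and the three right stabilizations (positive, negative, virtual). -/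
inductive MarkovBase : (Σ n, UVB n) → (Σ n, UVB n) → Prop
  | conj (n : ℕ) (α γ : UVB n) : MarkovBase ⟨n, α⟩ ⟨n, γ * α * γ⁻¹⟩
  | stabPos (n : ℕ) (α : UVB n) :
      MarkovBase ⟨n, α⟩ ⟨n + 1, UVB.incl n α * UVB.sigma (n + 1) n⟩
  | stabNeg (n : ℕ) (α : UVB n) :
      MarkovBase ⟨n, α⟩ ⟨n + 1, UVB.incl n α * (UVB.sigma (n + 1) n)⁻¹⟩
  | stabVirt (n : ℕ) (α : UVB n) :
      MarkovBase ⟨n, α⟩ ⟨n + 1, UVB.incl n α * UVB.rho (n + 1) n⟩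

/-- Fused Markov equivalence: the smallest equivalence relation generated by the
elementary Markov moves.  By Kamada's theorem, two unrestricted virtual braids are
fused Markov equivalent iff their closures are equivalent fused links. -/
def Markov : (Σ n, UVB n) → (Σ n, UVB n) → Prop := Relation.EqvGen MarkovBase

/-!
Write `β = α u⁻¹`, so that `α = β u` and `α [u, v] = β (v⁻¹ u v)`: the task is to conjugate `u` by
`v` while leaving the pure braid `β` alone. Conjugation by a word in the `ρ_k` permutes the indices
of the `λ_{i,j}`, and `λ_{i,j}`, `λ_{k,l}` commute unless `{i, j} = {k, l}`. A pure braid on the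
first `m - 1` strands commutes with every `λ_{i,m}` and `λ_{m,i}`, `i < m`.

Let `a < b < c < d` be the strands `i`, `n`, `n + 1`, `n + 2`, where `u` and `v` live on `a`, `b`.
A virtual stabilization followed by a conjugation moves `u` to the strands `a`, `c`; a second
virtual stabilization is made along the transposition `(a d)` rather than `(c d)`. The result is
`p β w`, where `p` is the copy of `u` on the strands `a`, `c` and `w` is virtual and exchanges `a`
with `d` and `b` with `c`. Let `q` be the copy of `v` on the strands `a`, `c`. Then
`m = w q w⁻¹` lies on the strands `b`, `d`, so `m` commutes with `p`, `q` and `β`, while `w`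
exchanges `q` and `m`. Conjugating by `(q m)⁻¹` therefore turns `p β w` into `q⁻¹ p q β w`, and
undoing the two stabilizations gives `β (v⁻¹ u v)`.
-/

section Semiconj

variable {G : Type*} [Group G] {g r r' a a' b b' : G}

theorem semiconjBy_transport (hr : SemiconjBy g r r') (ha : SemiconjBy g a a')
    (hb : SemiconjBy g b b') (h : SemiconjBy r a b) : SemiconjBy r' a' b' := by
  obtain ⟨rfl, rfl, rfl⟩ : r' = g * r * g⁻¹ ∧ a' = g * a * g⁻¹ ∧ b' = g * b * g⁻¹ :=
    ⟨eq_mul_inv_of_mul_eq hr.eq.symm, eq_mul_inv_of_mul_eq ha.eq.symm,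
      eq_mul_inv_of_mul_eq hb.eq.symm⟩
  exact SemiconjBy.conj_iff.mpr h

theorem commute_transport (ha : SemiconjBy g a a') (hb : SemiconjBy g b b') (h : Commute a b) :
    Commute a' b' :=
  semiconjBy_transport ha hb hb h

end Semiconj

section Conjugacy

variable {G : Type*} [Group G] {b p q m w : G}

theorem isConj_mul_mul_of_semiconjBy (hwq : SemiconjBy w q m) (hwm : SemiconjBy w m q)
    (hbq : Commute b q) (hbm : Commute b m) (hpm : Commute p m) (hqm : Commute q m) :
    IsConj (p * b * w) (q⁻¹ * p * q * b * w) := by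
  refine isConj_iff.mpr ⟨(q * m)⁻¹, ?_⟩
  have hw : Commute w (q * m) := by
    have h := hwq.mul_right hwm
    rwa [← hqm.eq] at h
  have hb : Commute b (q * m) := hbq.mul_right hbm
  calc (q * m)⁻¹ * (p * b * w) * ((q * m)⁻¹)⁻¹
      = (q * m)⁻¹ * p * (b * (w * (q * m))) := by group
    _ = (q * m)⁻¹ * p * (q * m) * b * w := by rw [hw.eq, ← mul_assoc b, hb.eq]; group
    _ = q⁻¹ * (m⁻¹ * p * m) * q * b * w := by rw [hqm.eq]; group
    _ = q⁻¹ * p * q * b * w := by rw [mul_assoc m⁻¹, hpm.eq, inv_mul_cancel_left]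

end Conjugacy

section Tuples

variable {X : Type*}

theorem injective_vec_three {i j k : X} (hij : i ≠ j) (hik : i ≠ k) (hjk : j ≠ k) :
    Function.Injective ![i, j, k] := by
  rw [← List.nodup_ofFn]
  simp [hij, hik, hjk]

theorem swap_mul_swap_apply [DecidableEq X] {a b c d : X} (h : [a, b, c, d].Nodup) :
    (Equiv.swap b c * Equiv.swap a d) a = d ∧ (Equiv.swap b c * Equiv.swap a d) d = a ∧
      (Equiv.swap b c * Equiv.swap a d) b = c ∧ (Equiv.swap b c * Equiv.swap a d) c = b := by
  simp only [List.nodup_cons, List.mem_cons, not_or] at h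
  simp only [Equiv.Perm.mul_apply, Equiv.swap_apply_def]
  grind

end Tuples

namespace UVB

section Relations

variable {n k l : ℕ}

theorem sigma_eq_mk (h₁ : 1 ≤ k) (h₂ : k < n) :
    sigma n k = PresentedGroup.mk (uvbRels n) (UVBGen.sg ⟨k - 1, by omega⟩) :=
  dif_pos ⟨h₁, by omega⟩

theorem rho_eq_mk (h₁ : 1 ≤ k) (h₂ : k < n) :
    rho n k = PresentedGroup.mk (uvbRels n) (UVBGen.rg ⟨k - 1, by omega⟩) :=
  dif_pos ⟨h₁, by omega⟩

theorem sigma_eq_one (h : ¬(1 ≤ k ∧ k < n)) : sigma n k = 1 := dif_neg (by omega)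

theorem rho_eq_one (h : ¬(1 ≤ k ∧ k < n)) : rho n k = 1 := dif_neg (by omega)

theorem rho_mul_rho (n k : ℕ) : rho n k * rho n k = 1 := by
  by_cases h : 1 ≤ k ∧ k < n
  · rw [rho_eq_mk h.1 h.2]
    exact PresentedGroup.one_of_mem (Or.inr (Or.inr ⟨_, rfl⟩))
  · rw [rho_eq_one h, one_mul]

@[simp]
theorem rho_inv (n k : ℕ) : (rho n k)⁻¹ = rho n k := inv_eq_of_mul_eq_one_left (rho_mul_rho n k)

theorem sigma_braid (hk : 1 ≤ k) (hkn : k + 1 < n) :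
    sigma n k * sigma n (k + 1) * sigma n k = sigma n (k + 1) * sigma n k * sigma n (k + 1) := by
  rw [sigma_eq_mk hk (by omega), sigma_eq_mk (Nat.le_add_left 1 k) hkn]
  exact PresentedGroup.mk_eq_mk_of_mul_inv_mem
    (Or.inl ⟨_, _, by simp only; omega, Or.inl rfl⟩)

theorem rho_braid (hk : 1 ≤ k) (hkn : k + 1 < n) :
    rho n k * rho n (k + 1) * rho n k = rho n (k + 1) * rho n k * rho n (k + 1) := by
  rw [rho_eq_mk hk (by omega), rho_eq_mk (Nat.le_add_left 1 k) hkn]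
  exact PresentedGroup.mk_eq_mk_of_mul_inv_mem
    (Or.inl ⟨_, _, by simp only; omega, Or.inr (Or.inl rfl)⟩)

theorem rho_rho_sigma (hk : 1 ≤ k) (hkn : k + 1 < n) :
    rho n k * rho n (k + 1) * sigma n k = sigma n (k + 1) * rho n k * rho n (k + 1) := by
  rw [rho_eq_mk hk (by omega), rho_eq_mk (Nat.le_add_left 1 k) hkn,
    sigma_eq_mk hk (by omega), sigma_eq_mk (Nat.le_add_left 1 k) hkn]
  exact PresentedGroup.mk_eq_mk_of_mul_inv_mem
    (Or.inl ⟨_, _, by simp only; omega, Or.inr (Or.inr (Or.inl rfl))⟩)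

theorem rho_sigma_sigma (hk : 1 ≤ k) (hkn : k + 1 < n) :
    rho n k * sigma n (k + 1) * sigma n k = sigma n (k + 1) * sigma n k * rho n (k + 1) := by
  rw [rho_eq_mk hk (by omega), rho_eq_mk (Nat.le_add_left 1 k) hkn,
    sigma_eq_mk hk (by omega), sigma_eq_mk (Nat.le_add_left 1 k) hkn]
  exact PresentedGroup.mk_eq_mk_of_mul_inv_mem
    (Or.inl ⟨_, _, by simp only; omega, Or.inr (Or.inr (Or.inr (Or.inl rfl)))⟩)

theorem rho_succ_sigma_sigma (hk : 1 ≤ k) (hkn : k + 1 < n) :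
    rho n (k + 1) * sigma n k * sigma n (k + 1) = sigma n k * sigma n (k + 1) * rho n k := by
  rw [rho_eq_mk hk (by omega), rho_eq_mk (Nat.le_add_left 1 k) hkn,
    sigma_eq_mk hk (by omega), sigma_eq_mk (Nat.le_add_left 1 k) hkn]
  exact PresentedGroup.mk_eq_mk_of_mul_inv_mem
    (Or.inl ⟨_, _, by simp only; omega, Or.inr (Or.inr (Or.inr (Or.inr rfl)))⟩)

theorem commute_sigma_sigma (h : k + 2 ≤ l ∨ l + 2 ≤ k) : Commute (sigma n k) (sigma n l) := by
  by_cases hk : 1 ≤ k ∧ k < n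
  · by_cases hl : 1 ≤ l ∧ l < n
    · rw [sigma_eq_mk hk.1 hk.2, sigma_eq_mk hl.1 hl.2]
      exact PresentedGroup.mk_eq_mk_of_mul_inv_mem
        (Or.inr (Or.inl ⟨_, _, by simp only; omega, Or.inl rfl⟩))
    · rw [sigma_eq_one hl]; exact Commute.one_right _
  · rw [sigma_eq_one hk]; exact Commute.one_left _

theorem commute_rho_rho (h : k + 2 ≤ l ∨ l + 2 ≤ k) : Commute (rho n k) (rho n l) := by
  by_cases hk : 1 ≤ k ∧ k < n
  · by_cases hl : 1 ≤ l ∧ l < n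
    · rw [rho_eq_mk hk.1 hk.2, rho_eq_mk hl.1 hl.2]
      exact PresentedGroup.mk_eq_mk_of_mul_inv_mem
        (Or.inr (Or.inl ⟨_, _, by simp only; omega, Or.inr (Or.inl rfl)⟩))
    · rw [rho_eq_one hl]; exact Commute.one_right _
  · rw [rho_eq_one hk]; exact Commute.one_left _

theorem commute_sigma_rho (h : k + 2 ≤ l ∨ l + 2 ≤ k) : Commute (sigma n k) (rho n l) := by
  by_cases hk : 1 ≤ k ∧ k < n
  · by_cases hl : 1 ≤ l ∧ l < n
    · rw [sigma_eq_mk hk.1 hk.2, rho_eq_mk hl.1 hl.2]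
      exact PresentedGroup.mk_eq_mk_of_mul_inv_mem
        (Or.inr (Or.inl ⟨_, _, by simp only; omega, Or.inr (Or.inr rfl)⟩))
    · rw [rho_eq_one hl]; exact Commute.one_right _
  · rw [sigma_eq_one hk]; exact Commute.one_left _

@[simp]
theorem incl_sigma (h : k < n) : incl n (sigma n k) = sigma (n + 1) k := by
  by_cases hk : 1 ≤ k
  · rw [sigma_eq_mk hk h, sigma_eq_mk hk (by omega)]
    exact PresentedGroup.toGroup.of _
  · rw [sigma_eq_one (by omega), sigma_eq_one (by omega), map_one]

@[simp]
theorem incl_rho (h : k < n) : incl n (rho n k) = rho (n + 1) k := by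
  by_cases hk : 1 ≤ k
  · rw [rho_eq_mk hk h, rho_eq_mk hk (by omega)]
    exact PresentedGroup.toGroup.of _
  · rw [rho_eq_one (by omega), rho_eq_one (by omega), map_one]

theorem closure_sigma_rho_eq_top (n : ℕ) :
    Subgroup.closure {g : UVB n | ∃ i j : Fin n, i + 1 = (j : ℕ) ∧ (g = sigma n j ∨ g = rho n j)} =
      ⊤ := by
  rw [eq_top_iff, ← PresentedGroup.closure_range_of (uvbRels n)]
  refine Subgroup.closure_mono ?_
  rintro _ ⟨i | i, rfl⟩
  · exact ⟨⟨i, by omega⟩, ⟨i + 1, by omega⟩, rfl,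
      Or.inl (sigma_eq_mk (Nat.le_add_left 1 i) (by omega)).symm⟩
  · exact ⟨⟨i, by omega⟩, ⟨i + 1, by omega⟩, rfl,
      Or.inr (rho_eq_mk (Nat.le_add_left 1 i) (by omega)).symm⟩

end Relations

section Lam

variable {n i j : ℕ}

theorem lam_self (n i : ℕ) : lam n i i = 1 := by simp [lam]

theorem lam_succ_right_self (n i : ℕ) : lam n i (i + 1) = rho n i * (sigma n i)⁻¹ := by simp [lam]

theorem lam_succ_left_self (n i : ℕ) : lam n (i + 1) i = (sigma n i)⁻¹ * rho n i := by simp [lam]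

theorem lam_succ_right (h : i < j) : lam n i (j + 1) = rho n j * lam n i j * rho n j := by
  obtain ⟨d, rfl⟩ := Nat.exists_eq_add_of_le h
  have hd : i + 1 + d - i = d + 1 := by omega
  simp [lam, hd, List.range'_1_concat, mul_assoc, show i < i + 1 + d + 1 by omega,
    show i < i + 1 + d by omega]

theorem lam_succ_left (h : i < j) : lam n (j + 1) i = rho n j * lam n j i * rho n j := by
  obtain ⟨d, rfl⟩ := Nat.exists_eq_add_of_le h
  have hd : i + 1 + d - i = d + 1 := by omega
  simp [lam, hd, List.range'_1_concat, mul_assoc, show i < i + 1 + d + 1 by omega,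
    show i < i + 1 + d by omega, show ¬ i + 1 + d + 1 < i by omega,
    show ¬ i + 1 + d < i by omega]

theorem incl_lam_of_lt (h : i < j) (hj : j ≤ n) :
    incl n (lam n i j) = lam (n + 1) i j ∧ incl n (lam n j i) = lam (n + 1) j i := by
  induction j, h using Nat.le_induction with
  | base => simp [lam_succ_right_self, lam_succ_left_self, show i < n from hj]
  | succ j h ih =>
    obtain ⟨ih₁, ih₂⟩ := ih (by omega)
    simp [lam_succ_right h, lam_succ_left h, ih₁, ih₂, show j < n from hj]

theorem incl_lam (hi : i ≤ n) (hj : j ≤ n) : incl n (lam n i j) = lam (n + 1) i j := by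
  rcases lt_trichotomy i j with h | rfl | h
  · exact (incl_lam_of_lt h hj).1
  · rw [lam_self, lam_self, map_one]
  · exact (incl_lam_of_lt h hi).2

end Lam

section Equivariance

variable {n : ℕ} {f : ℕ → ℕ → UVB n} {i j k : ℕ} {a b : UVB n}

theorem semiconjBy_rho_symm (h : SemiconjBy (rho n k) a b) : SemiconjBy (rho n k) b a := by
  simpa only [rho_inv] using h.inv_symm_left

/-- The properties shared by the families `(i, j) ↦ λ_{i,j}` and `(i, j) ↦ λ_{j,i}` for `i < j`:
they determine the conjugation action of the `ρ_k` on the family. -/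
structure IsStrandFamily (f : ℕ → ℕ → UVB n) : Prop where
  succ : ∀ {i j}, i < j → SemiconjBy (rho n j) (f i j) (f i (j + 1))
  shift : ∀ {i}, 1 ≤ i → i + 1 < n →
    SemiconjBy (rho n i * rho n (i + 1)) (f i (i + 1)) (f (i + 1) (i + 2))
  commute : ∀ {i k}, i + 2 ≤ k ∨ k + 2 ≤ i → Commute (rho n k) (f i (i + 1))

theorem semiconjBy_rho_rho_rho (hk : 1 ≤ k) (hkn : k + 1 < n) :
    SemiconjBy (rho n k * rho n (k + 1)) (rho n k) (rho n (k + 1)) := by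
  rw [SemiconjBy, rho_braid hk hkn, mul_assoc]

theorem semiconjBy_rho_rho_sigma (hk : 1 ≤ k) (hkn : k + 1 < n) :
    SemiconjBy (rho n k * rho n (k + 1)) (sigma n k) (sigma n (k + 1)) := by
  rw [SemiconjBy, rho_rho_sigma hk hkn, mul_assoc]

theorem isStrandFamily_lam (n : ℕ) : IsStrandFamily (lam n) where
  succ {i j} h := by
    rw [lam_succ_right h, SemiconjBy, mul_assoc _ (rho n j), rho_mul_rho, mul_one]
  shift hi hin := by
    rw [lam_succ_right_self, lam_succ_right_self]
    exact (semiconjBy_rho_rho_rho hi hin).mul_right (semiconjBy_rho_rho_sigma hi hin).inv_right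
  commute h := by
    rw [lam_succ_right_self]
    exact (commute_rho_rho h.symm).mul_right (commute_sigma_rho h).symm.inv_right

theorem isStrandFamily_lam_swap (n : ℕ) : IsStrandFamily fun i j => lam n j i where
  succ {i j} h := by
    rw [lam_succ_left h, SemiconjBy, mul_assoc _ (rho n j), rho_mul_rho, mul_one]
  shift hi hin := by
    rw [lam_succ_left_self, lam_succ_left_self]
    exact (semiconjBy_rho_rho_sigma hi hin).inv_right.mul_right (semiconjBy_rho_rho_rho hi hin)
  commute h := by
    rw [lam_succ_left_self]
    exact (commute_sigma_rho h).symm.inv_right.mul_right (commute_rho_rho h.symm)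

namespace IsStrandFamily

theorem semiconjBy_left (hf : IsStrandFamily f) (hi : 1 ≤ i) (hij : i + 2 ≤ j) (hin : i + 1 < n) :
    SemiconjBy (rho n i) (f i j) (f (i + 1) j) := by
  induction j, hij using Nat.le_induction with
  | base =>
    have h := (hf.shift hi hin).mul_left (semiconjBy_rho_symm (hf.succ (Nat.lt_succ_self i)))
    rwa [mul_assoc, rho_mul_rho, mul_one] at h
  | succ j hij ih =>
    exact semiconjBy_transport (commute_rho_rho (Or.inr hij)) (hf.succ (by omega))
      (hf.succ (by omega)) ih

theorem commute_outer (hf : IsStrandFamily f) (hij : i < j) (hk : j + 1 ≤ k ∨ k + 2 ≤ i) :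
    Commute (rho n k) (f i j) := by
  induction j, hij using Nat.le_induction with
  | base => exact hf.commute hk
  | succ j hij ih =>
    exact commute_transport (commute_rho_rho (by omega)) (hf.succ hij) (ih (by omega))

theorem commute_inner (hf : IsStrandFamily f) (hik : i < k) (hkj : k + 2 ≤ j) (hkn : k + 1 < n) :
    Commute (rho n k) (f i j) := by
  induction j, hkj using Nat.le_induction with
  | base =>
    have hk : 1 ≤ k := by omega
    have hbraid : SemiconjBy (rho n (k + 1) * rho n k) (rho n (k + 1)) (rho n k) := by
      rw [SemiconjBy, ← rho_braid hk hkn, mul_assoc]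
    exact commute_transport hbraid ((hf.succ (by omega)).mul_left (hf.succ hik))
      (hf.commute_outer hik (Or.inl le_rfl))
  | succ j hkj ih =>
    exact commute_transport (commute_rho_rho (Or.inr hkj)) (hf.succ (by omega)) ih

theorem semiconjBy_swap (hf : IsStrandFamily f) (hi : 1 ≤ i) (hij : i < j) (hj : j ≤ n)
    (hk : 1 ≤ k) (hkn : k < n) (hne : ¬(i = k ∧ j = k + 1)) :
    SemiconjBy (rho n k) (f i j) (f (Equiv.swap k (k + 1) i) (Equiv.swap k (k + 1) j)) := by
  obtain h | rfl | rfl | rfl | ⟨rfl, h⟩ | h : (j + 1 ≤ k ∨ k + 2 ≤ i) ∨ j = k ∨ i = k + 1 ∨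
      i = k ∨ (j = k + 1 ∧ i < k) ∨ (i < k ∧ k + 2 ≤ j) := by omega
  · rw [Equiv.swap_apply_of_ne_of_ne (by omega) (by omega),
      Equiv.swap_apply_of_ne_of_ne (by omega) (by omega)]
    exact hf.commute_outer hij h
  · rw [Equiv.swap_apply_left, Equiv.swap_apply_of_ne_of_ne (by omega) (by omega)]
    exact hf.succ hij
  · rw [Equiv.swap_apply_right, Equiv.swap_apply_of_ne_of_ne (by omega) (by omega)]
    exact semiconjBy_rho_symm (hf.semiconjBy_left hk (by omega) (by omega))
  · rw [Equiv.swap_apply_left, Equiv.swap_apply_of_ne_of_ne (by omega) (by omega)]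
    exact hf.semiconjBy_left hk (by omega) (by omega)
  · rw [Equiv.swap_apply_right, Equiv.swap_apply_of_ne_of_ne (by omega) (by omega)]
    exact semiconjBy_rho_symm (hf.succ h)
  · rw [Equiv.swap_apply_of_ne_of_ne (by omega) (by omega),
      Equiv.swap_apply_of_ne_of_ne (by omega) (by omega)]
    exact hf.commute_inner h.1 h.2 (by omega)

end IsStrandFamily

theorem semiconjBy_rho_lam_succ (n k : ℕ) :
    SemiconjBy (rho n k) (lam n k (k + 1)) (lam n (k + 1) k) := by
  rw [lam_succ_right_self, lam_succ_left_self, SemiconjBy, ← mul_assoc, rho_mul_rho, one_mul,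
    mul_assoc, rho_mul_rho, mul_one]

theorem semiconjBy_rho_lam (hk : 1 ≤ k) (hkn : k < n) (hi : 1 ≤ i) (hin : i ≤ n) (hj : 1 ≤ j)
    (hjn : j ≤ n) :
    SemiconjBy (rho n k) (lam n i j)
      (lam n (Equiv.swap k (k + 1) i) (Equiv.swap k (k + 1) j)) := by
  rcases lt_trichotomy i j with hij | rfl | hji
  · by_cases h : i = k ∧ j = k + 1
    · obtain ⟨rfl, rfl⟩ := h
      rw [Equiv.swap_apply_left, Equiv.swap_apply_right]
      exact semiconjBy_rho_lam_succ n i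
    · exact (isStrandFamily_lam n).semiconjBy_swap hi hij hjn hk hkn h
  · rw [lam_self, lam_self]
    exact SemiconjBy.one_right _
  · by_cases h : j = k ∧ i = k + 1
    · obtain ⟨rfl, rfl⟩ := h
      rw [Equiv.swap_apply_left, Equiv.swap_apply_right]
      exact semiconjBy_rho_symm (semiconjBy_rho_lam_succ n j)
    · exact (isStrandFamily_lam_swap n).semiconjBy_swap hj hji hin hk hkn h

end Equivariance

section Realizes

variable {n : ℕ} {r r₁ r₂ : UVB n} {π π₁ π₂ : Equiv.Perm (Fin n)} {i j k l : Fin n}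

/-- The element `λ_{i+1,j+1}`: the strands are numbered by `Fin n` here, so that permutations of
`Fin n` act on the indices. -/
def lamFin (i j : Fin n) : UVB n := lam n (i + 1) (j + 1)

/-- The braid `r` acts on the elements `λ_{i,j}` by conjugation as `π` acts on their indices, like
any word in the `ρ_k` with underlying permutation `π`. -/
def Realizes (r : UVB n) (π : Equiv.Perm (Fin n)) : Prop :=
  ∀ i j, SemiconjBy r (lamFin i j) (lamFin (π i) (π j))

theorem lamFin_self (i : Fin n) : lamFin i i = 1 := lam_self n _

theorem incl_lamFin (i j : Fin n) : incl n (lamFin i j) = lamFin i.castSucc j.castSucc :=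
  incl_lam (by omega) (by omega)

theorem Realizes.one : Realizes (1 : UVB n) 1 := fun _ _ => SemiconjBy.one_left _

theorem Realizes.mul (h₁ : Realizes r₁ π₁) (h₂ : Realizes r₂ π₂) :
    Realizes (r₁ * r₂) (π₁ * π₂) :=
  fun i j => (h₁ (π₂ i) (π₂ j)).mul_left (h₂ i j)

theorem swap_succ_succ_apply (a b c : Fin n) :
    Equiv.swap (a + 1 : ℕ) (b + 1) (c + 1) = Equiv.swap a b c + 1 :=
  (Nat.succ_injective.comp Fin.val_injective).swap_apply a b c

theorem realizes_rho (h : i + 1 = (j : ℕ)) : Realizes (rho n j) (Equiv.swap i j) := by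
  have hswap (c : Fin n) : Equiv.swap (j : ℕ) (j + 1) (c + 1) = Equiv.swap i j c + 1 := by
    rw [← swap_succ_succ_apply, h]
  intro a b
  have hab := semiconjBy_rho_lam (n := n) (k := j) (i := a + 1) (j := b + 1) (by omega) j.isLt
    (by omega) (by omega) (by omega) (by omega)
  rwa [hswap, hswap] at hab

theorem Realizes.inv (h : Realizes r π) : Realizes r⁻¹ π⁻¹ := by
  intro i j
  have hinv := (h (π⁻¹ i) (π⁻¹ j)).inv_symm_left
  rwa [← Equiv.Perm.mul_apply, ← Equiv.Perm.mul_apply, mul_inv_cancel, Equiv.Perm.one_apply,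
    Equiv.Perm.one_apply] at hinv

theorem exists_realizes_incl (π : Equiv.Perm (Fin n)) :
    ∃ (r : UVB n) (π' : Equiv.Perm (Fin (n + 1))), Realizes r π ∧ Realizes (incl n r) π' ∧
      π' (Fin.last n) = Fin.last n ∧ ∀ j : Fin n, π' j.castSucc = (π j).castSucc := by
  obtain _ | n := n
  · exact ⟨1, 1, fun i => i.elim0, by rw [map_one]; exact Realizes.one, rfl, fun j => j.elim0⟩
  have hπ : π ∈ Submonoid.closure (Set.range fun i : Fin n => Equiv.swap i.castSucc i.succ) := by
    rw [Equiv.Perm.mclosure_swap_castSucc_succ]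
    exact Submonoid.mem_top π
  induction hπ using Submonoid.closure_induction with
  | mem _ h =>
    obtain ⟨i, rfl⟩ := h
    refine ⟨rho (n + 1) i.succ, Equiv.swap i.castSucc.castSucc i.succ.castSucc,
      realizes_rho i.val_succ.symm, ?_, ?_, fun j => ?_⟩
    · rw [incl_rho i.succ.isLt]
      exact realizes_rho (j := i.succ.castSucc) i.val_succ.symm
    · exact Equiv.swap_apply_of_ne_of_ne (Fin.castSucc_ne_last _).symm (Fin.castSucc_ne_last _).symm
    · exact (Fin.castSucc_injective _).swap_apply _ _ _
  | one => exact ⟨1, 1, Realizes.one, by rw [map_one]; exact Realizes.one, rfl, fun _ => rfl⟩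
  | mul _ _ _ _ h₁ h₂ =>
    obtain ⟨r₁, π₁', h₁, h₁', hlast₁, hcast₁⟩ := h₁
    obtain ⟨r₂, π₂', h₂, h₂', hlast₂, hcast₂⟩ := h₂
    refine ⟨r₁ * r₂, π₁' * π₂', h₁.mul h₂, by rw [map_mul]; exact h₁'.mul h₂', ?_, fun j => ?_⟩
    · rw [Equiv.Perm.mul_apply, hlast₂, hlast₁]
    · rw [Equiv.Perm.mul_apply, hcast₂, hcast₁, Equiv.Perm.mul_apply]

theorem exists_realizes_conj_rho (i : Fin (n + 1)) :
    ∃ r : UVB (n + 1), Realizes (incl (n + 1) r * rho (n + 2) (n + 1) * (incl (n + 1) r)⁻¹)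
      (Equiv.swap i.castSucc (Fin.last (n + 1))) := by
  obtain ⟨r, π, -, hr, hlast, hcast⟩ := exists_realizes_incl (Equiv.swap i (Fin.last n))
  have hswap : Equiv.swap i.castSucc (Fin.last (n + 1)) =
      π * Equiv.swap (Fin.last n).castSucc (Fin.last (n + 1)) * π⁻¹ := by
    rw [← Equiv.swap_apply_apply, hlast, hcast, Equiv.swap_apply_right]
  refine ⟨r, ?_⟩
  rw [hswap]
  exact (hr.mul (realizes_rho (j := Fin.last (n + 1)) rfl)).mul hr.inv

theorem commute_lamFin_map (π : Equiv.Perm (Fin n)) (h : Commute (lamFin i j) (lamFin k l)) :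
    Commute (lamFin (π i) (π j)) (lamFin (π k) (π l)) := by
  obtain ⟨r, -, hr, -⟩ := exists_realizes_incl π
  exact commute_transport (hr i j) (hr k l) h

end Realizes

section Commutation

variable {n k : ℕ}

theorem sigma_eq_lam_inv_mul_rho (n k : ℕ) : sigma n k = (lam n k (k + 1))⁻¹ * rho n k := by
  rw [lam_succ_right_self, mul_inv_rev, inv_inv, rho_inv, mul_assoc, rho_mul_rho, mul_one]

theorem semiconjBy_rho_succ_lam (n k : ℕ) :
    SemiconjBy (rho n (k + 1)) (lam n k (k + 1)) (lam n k (k + 2)) :=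
  (isStrandFamily_lam n).succ (Nat.lt_succ_self k)

theorem semiconjBy_rho_lam_succ_succ (hk : 1 ≤ k) (hkn : k + 1 < n) :
    SemiconjBy (rho n k) (lam n (k + 1) (k + 2)) (lam n k (k + 2)) :=
  semiconjBy_rho_symm ((isStrandFamily_lam n).semiconjBy_left hk le_rfl hkn)

theorem sigma_mul_sigma_succ (hk : 1 ≤ k) (hkn : k + 1 < n) :
    sigma n k * sigma n (k + 1) =
      (lam n k (k + 1))⁻¹ * (lam n k (k + 2))⁻¹ * (rho n k * rho n (k + 1)) := by
  rw [sigma_eq_lam_inv_mul_rho, sigma_eq_lam_inv_mul_rho, mul_assoc, ← mul_assoc (rho n k),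
    (semiconjBy_rho_lam_succ_succ hk hkn).inv_right.eq]
  simp only [mul_assoc]

theorem sigma_succ_mul_sigma (n k : ℕ) :
    sigma n (k + 1) * sigma n k =
      (lam n (k + 1) (k + 2))⁻¹ * (lam n k (k + 2))⁻¹ * (rho n (k + 1) * rho n k) := by
  rw [sigma_eq_lam_inv_mul_rho, sigma_eq_lam_inv_mul_rho, mul_assoc, ← mul_assoc (rho n (k + 1)),
    (semiconjBy_rho_succ_lam n k).inv_right.eq]
  simp only [mul_assoc]

theorem sigma_mul_sigma_succ_mul_sigma (hk : 1 ≤ k) (hkn : k + 1 < n) :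
    sigma n k * sigma n (k + 1) * sigma n k =
      (lam n k (k + 1))⁻¹ * (lam n k (k + 2))⁻¹ * (lam n (k + 1) (k + 2))⁻¹ *
        (rho n k * rho n (k + 1) * rho n k) := by
  have hshift := ((isStrandFamily_lam n).shift hk hkn).inv_right
  rw [sigma_mul_sigma_succ hk hkn, sigma_eq_lam_inv_mul_rho n k, mul_assoc,
    ← mul_assoc _ _ (rho n k), hshift.eq]
  simp only [mul_assoc]

theorem sigma_succ_mul_sigma_mul_sigma_succ (hk : 1 ≤ k) (hkn : k + 1 < n) :
    sigma n (k + 1) * sigma n k * sigma n (k + 1) =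
      (lam n (k + 1) (k + 2))⁻¹ * (lam n k (k + 2))⁻¹ * (lam n k (k + 1))⁻¹ *
        (rho n (k + 1) * rho n k * rho n (k + 1)) := by
  have hshift : SemiconjBy (rho n (k + 1) * rho n k) (lam n (k + 1) (k + 2))⁻¹
      (lam n k (k + 1))⁻¹ := by
    simpa only [mul_inv_rev, rho_inv] using
      ((isStrandFamily_lam n).shift hk hkn).inv_symm_left.inv_right
  rw [sigma_succ_mul_sigma, sigma_eq_lam_inv_mul_rho n (k + 1), mul_assoc,
    ← mul_assoc _ _ (rho n (k + 1)), hshift.eq]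
  simp only [mul_assoc]

theorem commute_lam_same_source (hk : 1 ≤ k) (hkn : k + 1 < n) :
    Commute (lam n k (k + 1)) (lam n k (k + 2)) := by
  have hswap := semiconjBy_rho_succ_lam n k
  have hswap' := hswap.inv_right.mul_right (semiconjBy_rho_symm hswap).inv_right
  refine (Commute.inv_inv_iff.mp (mul_right_cancel
    (b := rho n (k + 1) * (rho n k * rho n (k + 1))) ?_)).symm
  calc
    _ = rho n (k + 1) * sigma n k * sigma n (k + 1) := by
      rw [mul_assoc (rho n _) (sigma n _), sigma_mul_sigma_succ hk hkn, ← mul_assoc, ← mul_assoc,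
        ← mul_assoc (rho n (k + 1)), hswap'.eq]
      simp only [mul_assoc]
    _ = sigma n k * sigma n (k + 1) * rho n k := rho_succ_sigma_sigma hk hkn
    _ = _ := by
      rw [sigma_mul_sigma_succ hk hkn, mul_assoc, rho_braid hk hkn, mul_assoc (rho n _)]

theorem commute_lam_same_target (hk : 1 ≤ k) (hkn : k + 1 < n) :
    Commute (lam n k (k + 2)) (lam n (k + 1) (k + 2)) := by
  have hswap := semiconjBy_rho_lam_succ_succ hk hkn
  have hswap' := hswap.inv_right.mul_right (semiconjBy_rho_symm hswap).inv_right
  refine Commute.inv_inv_iff.mp (mul_right_cancel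
    (b := rho n k * (rho n (k + 1) * rho n k)) ?_)
  calc
    _ = rho n k * sigma n (k + 1) * sigma n k := by
      rw [mul_assoc (rho n _) (sigma n _), sigma_succ_mul_sigma, ← mul_assoc, ← mul_assoc,
        ← mul_assoc (rho n k), hswap'.eq]
      simp only [mul_assoc]
    _ = sigma n (k + 1) * sigma n k * rho n (k + 1) := rho_sigma_sigma hk hkn
    _ = _ := by
      rw [sigma_succ_mul_sigma, mul_assoc, ← rho_braid hk hkn, mul_assoc (rho n _)]

theorem commute_lam_chain (hk : 1 ≤ k) (hkn : k + 1 < n) :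
    Commute (lam n k (k + 1)) (lam n (k + 1) (k + 2)) := by
  have h := sigma_braid hk hkn
  rw [sigma_mul_sigma_succ_mul_sigma hk hkn, sigma_succ_mul_sigma_mul_sigma_succ hk hkn,
    rho_braid hk hkn, mul_left_inj, (commute_lam_same_source hk hkn).inv_inv.eq,
    (commute_lam_same_target hk hkn).symm.inv_inv.eq, mul_assoc, mul_assoc] at h
  exact Commute.inv_inv_iff.mp (mul_left_cancel h)

theorem commute_lam_disjoint (n k : ℕ) :
    Commute (lam n k (k + 1)) (lam n (k + 2) (k + 3)) := by
  rw [lam_succ_right_self, lam_succ_right_self]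
  have hrho : Commute (rho n k) (rho n (k + 2) * (sigma n (k + 2))⁻¹) :=
    (commute_rho_rho (by omega)).mul_right (commute_sigma_rho (by omega)).symm.inv_right
  have hsigma : Commute (sigma n k) (rho n (k + 2) * (sigma n (k + 2))⁻¹) :=
    (commute_sigma_rho (by omega)).mul_right (commute_sigma_sigma (by omega)).inv_right
  exact hrho.mul_left hsigma.inv_left

theorem commute_lamFin_of_injective {m : ℕ} {x : Fin m → Fin n} (hx : Function.Injective x)
    (a b c d : Fin m)
    (h : m ≤ n → Commute (lam n (a + 1) (b + 1)) (lam n (c + 1) (d + 1))) :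
    Commute (lamFin (x a) (x b)) (lamFin (x c) (x d)) := by
  have hmn : m ≤ n := by simpa using Fintype.card_le_of_injective x hx
  obtain ⟨π, hπ⟩ := Equiv.Perm.exists_extending_pair _ x (Fin.castLE_injective hmn) hx
  simp only [← hπ]
  exact commute_lamFin_map π (h hmn)

theorem commute_lamFin_same_source {i j k : Fin n} (hij : i ≠ j) (hik : i ≠ k) (hjk : j ≠ k) :
    Commute (lamFin i j) (lamFin i k) :=
  commute_lamFin_of_injective (injective_vec_three hij hik hjk) 0 1 0 2
    fun h => commute_lam_same_source (k := 1) le_rfl h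

theorem commute_lamFin_same_target {i j k : Fin n} (hij : i ≠ j) (hik : i ≠ k) (hjk : j ≠ k) :
    Commute (lamFin i k) (lamFin j k) :=
  commute_lamFin_of_injective (injective_vec_three hij hik hjk) 0 2 1 2
    fun h => commute_lam_same_target (k := 1) le_rfl h

theorem commute_lamFin_chain {i j k : Fin n} (hij : i ≠ j) (hik : i ≠ k) (hjk : j ≠ k) :
    Commute (lamFin i j) (lamFin j k) :=
  commute_lamFin_of_injective (injective_vec_three hij hik hjk) 0 1 1 2
    fun h => commute_lam_chain (k := 1) le_rfl h

theorem commute_lamFin_disjoint {i j k l : Fin n} (h : [i, j, k, l].Nodup) :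
    Commute (lamFin i j) (lamFin k l) := by
  have hx : Function.Injective ![i, j, k, l] := by
    rw [← List.nodup_ofFn]
    simpa using h
  exact commute_lamFin_of_injective hx 0 1 2 3 fun _ => commute_lam_disjoint n 1

theorem commute_lamFin {i j k l : Fin n} (h : s(i, j) ≠ s(k, l)) :
    Commute (lamFin i j) (lamFin k l) := by
  rw [Ne, Sym2.eq_iff, not_or] at h
  by_cases hij : i = j
  · rw [hij, lamFin_self]
    exact Commute.one_left _
  by_cases hkl : k = l
  · rw [hkl, lamFin_self]
    exact Commute.one_right _
  by_cases hik : i = k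
  · subst hik
    exact commute_lamFin_same_source hij hkl (by tauto)
  by_cases hjl : j = l
  · subst hjl
    exact commute_lamFin_same_target hik hij hkl
  by_cases hjk : j = k
  · subst hjk
    exact commute_lamFin_chain hij (by tauto) hkl
  by_cases hil : i = l
  · subst hil
    exact (commute_lamFin_chain hkl (Ne.symm hjk) hij).symm
  · exact commute_lamFin_disjoint (by simp [*])

end Commutation

section PureBraids

variable {n : ℕ} {r x u v : UVB n} {π : Equiv.Perm (Fin n)} {i j k l : Fin n}

theorem semiconjBy_sigma_lamFin (h : i + 1 = (j : ℕ)) (hne : s(k, l) ≠ s(i, j)) :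
    SemiconjBy (sigma n j) (lamFin k l) (lamFin (Equiv.swap i j k) (Equiv.swap i j l)) := by
  have hσ : sigma n j = (lamFin i j)⁻¹ * rho n j := by
    rw [sigma_eq_lam_inv_mul_rho, lamFin, h]
  have hne' : s(Equiv.swap i j k, Equiv.swap i j l) ≠ s(i, j) := by
    have h' := (Sym2.map.injective (Equiv.swap i j).injective).ne hne
    rwa [Sym2.map_mk, Sym2.map_mk, Equiv.swap_apply_left, Equiv.swap_apply_right,
      Sym2.eq_swap (a := j)] at h'
  rw [hσ]
  exact SemiconjBy.mul_left (commute_lamFin hne').symm.inv_left (realizes_rho h k l)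

theorem isIota_apply {ι : UVB n →* Equiv.Perm (Fin n)} (hι : IsIota n ι) (h : i + 1 = (j : ℕ)) :
    ι (sigma n j) = Equiv.swap i j ∧ ι (rho n j) = Equiv.swap i j := by
  have hi : (⟨j - 1, by omega⟩ : Fin n) = i := Fin.ext (by simp only; omega)
  simpa only [hi, Fin.eta] using hι j (by omega) (by omega)

theorem semiconjBy_incl_generator {g : UVB n} {a b : Fin (n + 1)} (h : i + 1 = (j : ℕ))
    (hg : g = sigma n j ∨ g = rho n j) (hne : s(a, b) ≠ s(i.castSucc, j.castSucc)) :
    SemiconjBy (incl n g) (lamFin a b) (lamFin (Equiv.swap i.castSucc j.castSucc a)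
      (Equiv.swap i.castSucc j.castSucc b)) := by
  rcases hg with rfl | rfl
  · rw [incl_sigma j.isLt]
    exact semiconjBy_sigma_lamFin (j := j.castSucc) h hne
  · rw [incl_rho j.isLt]
    exact realizes_rho (j := j.castSucc) h a b

theorem semiconjBy_incl_lamFin_last {ι : UVB n →* Equiv.Perm (Fin n)} (hι : IsIota n ι)
    (α : UVB n) (j : Fin n) :
    SemiconjBy (incl n α) (lamFin j.castSucc (Fin.last n)) (lamFin (ι α j).castSucc (Fin.last n)) ∧
    SemiconjBy (incl n α) (lamFin (Fin.last n) j.castSucc)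
      (lamFin (Fin.last n) (ι α j).castSucc) := by
  have hα : α ∈ Subgroup.closure
      {g : UVB n | ∃ i j : Fin n, i + 1 = (j : ℕ) ∧ (g = sigma n j ∨ g = rho n j)} :=
    closure_sigma_rho_eq_top n ▸ Subgroup.mem_top α
  induction hα using Subgroup.closure_induction generalizing j with
  | mem g hg =>
    obtain ⟨i, k, hik, hg⟩ := hg
    have hιg : ι g = Equiv.swap i k := by
      rcases hg with rfl | rfl
      exacts [(isIota_apply hι hik).1, (isIota_apply hι hik).2]
    have hj : Equiv.swap i.castSucc k.castSucc j.castSucc = (ι g j).castSucc := by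
      rw [hιg, (Fin.castSucc_injective n).swap_apply]
    have hlast : Equiv.swap i.castSucc k.castSucc (Fin.last n) = Fin.last n :=
      Equiv.swap_apply_of_ne_of_ne i.castSucc_ne_last.symm k.castSucc_ne_last.symm
    have h₁ := semiconjBy_incl_generator hik hg (a := j.castSucc) (b := Fin.last n)
      (by simp [i.castSucc_ne_last.symm, k.castSucc_ne_last.symm])
    have h₂ := semiconjBy_incl_generator hik hg (a := Fin.last n) (b := j.castSucc)
      (by simp [i.castSucc_ne_last.symm, k.castSucc_ne_last.symm])
    rw [hj, hlast] at h₁ h₂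
    exact ⟨h₁, h₂⟩
  | one => simp
  | mul α β _ _ hα hβ =>
    simp only [map_mul]
    exact ⟨(hα (ι β j)).1.mul_left (hβ j).1, (hα (ι β j)).2.mul_left (hβ j).2⟩
  | inv α _ hα =>
    have h := hα ((ι α)⁻¹ j)
    rw [← Equiv.Perm.mul_apply, mul_inv_cancel, Equiv.Perm.one_apply] at h
    simp only [map_inv]
    exact ⟨h.1.inv_symm_left, h.2.inv_symm_left⟩

/-- The subgroup generated by `λ_{i,j}` and `λ_{j,i}`, the pure braids involving only the strands
`i` and `j`. -/
def pairSubgroup (i j : Fin n) : Subgroup (UVB n) := Subgroup.closure {lamFin i j, lamFin j i}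

theorem pairSubgroup_comm (i j : Fin n) : pairSubgroup i j = pairSubgroup j i := by
  rw [pairSubgroup, Set.pair_comm, pairSubgroup]

theorem lamFin_mem_pairSubgroup (i j : Fin n) : lamFin i j ∈ pairSubgroup i j :=
  Subgroup.subset_closure (Set.mem_insert _ _)

theorem lamFin_swap_mem_pairSubgroup (i j : Fin n) : lamFin j i ∈ pairSubgroup i j :=
  pairSubgroup_comm j i ▸ lamFin_mem_pairSubgroup j i

theorem pairSubgroup_le {H : Subgroup (UVB n)} :
    pairSubgroup i j ≤ H ↔ lamFin i j ∈ H ∧ lamFin j i ∈ H := by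
  rw [pairSubgroup, Subgroup.closure_le, Set.pair_subset_iff]; rfl

theorem commute_of_mem_pairSubgroup (h₁ : Commute x (lamFin i j)) (h₂ : Commute x (lamFin j i))
    (hu : u ∈ pairSubgroup i j) : Commute x u := by
  have hle : pairSubgroup i j ≤ Subgroup.centralizer {x} :=
    pairSubgroup_le.mpr ⟨Subgroup.mem_centralizer_singleton_iff.mpr h₁.symm,
      Subgroup.mem_centralizer_singleton_iff.mpr h₂.symm⟩
  exact (Subgroup.mem_centralizer_singleton_iff.mp (hle hu)).symm

theorem commute_pairSubgroup (h : s(i, j) ≠ s(k, l)) (hu : u ∈ pairSubgroup i j)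
    (hv : v ∈ pairSubgroup k l) : Commute u v := by
  have hcomm {a b : Fin n} (hab : s(i, j) ≠ s(a, b)) : Commute u (lamFin a b) :=
    (commute_of_mem_pairSubgroup (commute_lamFin hab.symm)
      (commute_lamFin (Sym2.eq_swap ▸ hab).symm) hu).symm
  exact commute_of_mem_pairSubgroup (hcomm h) (hcomm (by rwa [Sym2.eq_swap (a := l)])) hv

theorem Realizes.conj_mem_pairSubgroup (hr : Realizes r π) (hu : u ∈ pairSubgroup i j) :
    r * u * r⁻¹ ∈ pairSubgroup (π i) (π j) := by
  have hconj (k l : Fin n) : MulAut.conj r (lamFin k l) = lamFin (π k) (π l) :=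
    mul_inv_eq_of_eq_mul (hr k l).eq
  have hle : pairSubgroup i j ≤ (pairSubgroup (π i) (π j)).comap (MulAut.conj r).toMonoidHom :=
    pairSubgroup_le.mpr ⟨Subgroup.mem_comap.mpr (hconj i j ▸ lamFin_mem_pairSubgroup _ _),
      Subgroup.mem_comap.mpr (hconj j i ▸ lamFin_swap_mem_pairSubgroup _ _)⟩
  exact hle hu

theorem incl_mem_pairSubgroup (hu : u ∈ pairSubgroup i j) :
    incl n u ∈ pairSubgroup i.castSucc j.castSucc := by
  have hle : pairSubgroup i j ≤ (pairSubgroup i.castSucc j.castSucc).comap (incl n) :=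
    pairSubgroup_le.mpr ⟨Subgroup.mem_comap.mpr (incl_lamFin i j ▸ lamFin_mem_pairSubgroup _ _),
      Subgroup.mem_comap.mpr (incl_lamFin j i ▸ lamFin_swap_mem_pairSubgroup _ _)⟩
  exact hle hu

theorem commute_incl_of_mem_ker {ι : UVB n →* Equiv.Perm (Fin n)} (hι : IsIota n ι) {β : UVB n}
    (hβ : β ∈ ι.ker) {j : Fin n} {p : UVB (n + 1)} (hp : p ∈ pairSubgroup j.castSucc (Fin.last n)) :
    Commute (incl n β) p := by
  have h := semiconjBy_incl_lamFin_last hι β j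
  rw [MonoidHom.mem_ker.mp hβ, Equiv.Perm.one_apply] at h
  exact commute_of_mem_pairSubgroup h.1 h.2 hp

theorem pairSubgroup_le_ker {ι : UVB n →* Equiv.Perm (Fin n)} (hι : IsIota n ι)
    (h : i + 1 = (j : ℕ)) : pairSubgroup i j ≤ ι.ker := by
  obtain ⟨hσ, hρ⟩ := isIota_apply hι h
  refine pairSubgroup_le.mpr ⟨?_, ?_⟩ <;> rw [MonoidHom.mem_ker, lamFin, h]
  · rw [lam_succ_right_self, map_mul, map_inv, hσ, hρ, mul_inv_cancel]
  · rw [lam_succ_left_self, map_mul, map_inv, hσ, hρ, inv_mul_cancel]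

theorem commute_rho_succ_incl_incl (γ : UVB n) :
    Commute (rho (n + 2) (n + 1)) (incl (n + 1) (incl n γ)) := by
  have hγ : γ ∈ Subgroup.closure
      {g : UVB n | ∃ i j : Fin n, i + 1 = (j : ℕ) ∧ (g = sigma n j ∨ g = rho n j)} :=
    closure_sigma_rho_eq_top n ▸ Subgroup.mem_top γ
  induction hγ using Subgroup.closure_induction with
  | mem g hg =>
    obtain ⟨_, j, _, rfl | rfl⟩ := hg
    · rw [incl_sigma j.isLt, incl_sigma (by omega)]
      exact (commute_sigma_rho (by omega)).symm
    · rw [incl_rho j.isLt, incl_rho (by omega)]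
      exact commute_rho_rho (by omega)
  | one => simp
  | mul _ _ _ _ h₁ h₂ => simpa only [map_mul] using h₁.mul_right h₂
  | inv _ _ h => simpa only [map_inv] using h.inv_right

end PureBraids

end UVB

namespace Markov

variable {n : ℕ}

theorem of_isConj {a b : UVB n} (h : IsConj a b) : Markov ⟨n, a⟩ ⟨n, b⟩ := by
  obtain ⟨c, rfl⟩ := isConj_iff.mp h
  exact Relation.EqvGen.rel _ _ (MarkovBase.conj n a c)

theorem symm {x y : Σ n, UVB n} (h : Markov x y) : Markov y x := Relation.EqvGen.symm _ _ h

theorem trans {x y z : Σ n, UVB n} (h₁ : Markov x y) (h₂ : Markov y z) : Markov x z :=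
  Relation.EqvGen.trans _ _ _ h₁ h₂

theorem mul_conj_rho (a r : UVB n) :
    Markov ⟨n, a⟩
      ⟨n + 1, UVB.incl n a * (UVB.incl n r * UVB.rho (n + 1) n * (UVB.incl n r)⁻¹)⟩ := by
  have hconj : IsConj a (r⁻¹ * a * r) := isConj_iff.mpr ⟨r⁻¹, by rw [inv_inv]⟩
  refine (of_isConj hconj).trans
    (Markov.trans (Relation.EqvGen.rel _ _ (MarkovBase.stabVirt n _)) (of_isConj ?_))
  refine isConj_iff.mpr ⟨UVB.incl n r, ?_⟩
  simp only [map_mul, map_inv]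
  group

theorem rho_conj_mul_mul_rho (b u : UVB n) :
    Markov ⟨n, b * u⟩ ⟨n + 1, UVB.rho (n + 1) n * UVB.incl n u * UVB.rho (n + 1) n *
      UVB.incl n b * UVB.rho (n + 1) n⟩ := by
  refine Markov.trans (Relation.EqvGen.rel _ _ (MarkovBase.stabVirt n _)) (of_isConj ?_)
  refine isConj_iff.mpr ⟨UVB.rho (n + 1) n * (UVB.incl n b)⁻¹, ?_⟩
  rw [map_mul, mul_inv_rev, inv_inv, UVB.rho_inv]
  group

end Markov

namespace UVB

section Commutator

variable {n : ℕ}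

theorem rho_mul_conj_mul_rho (k : ℕ) (u v : UVB n) :
    rho n k * (v⁻¹ * u * v) * rho n k =
      (rho n k * v * rho n k)⁻¹ * (rho n k * u * rho n k) * (rho n k * v * rho n k) := by
  have hρ (x : UVB n) : rho n k * x * rho n k = rho n k * x * (rho n k)⁻¹ := by rw [rho_inv]
  rw [hρ, hρ, hρ]
  group

theorem swap_castSucc_last_apply (i : Fin n) :
    Equiv.swap (Fin.last n).castSucc (Fin.last (n + 1)) i.castSucc.castSucc =
      i.castSucc.castSucc :=
  Equiv.swap_apply_of_ne_of_ne ((Fin.castSucc_injective _).ne i.castSucc_ne_last)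
    (Fin.castSucc_ne_last _)

theorem rho_conj_incl_mem_pairSubgroup {u : UVB (n + 1)} {i : Fin n}
    (hu : u ∈ pairSubgroup i.castSucc (Fin.last n)) :
    rho (n + 2) (n + 1) * incl (n + 1) u * rho (n + 2) (n + 1) ∈
      pairSubgroup i.castSucc.castSucc (Fin.last (n + 1)) := by
  have hρ : Realizes (rho (n + 2) (n + 1)) (Equiv.swap (Fin.last n).castSucc (Fin.last (n + 1))) :=
    realizes_rho (j := Fin.last (n + 1)) rfl
  have h := hρ.conj_mem_pairSubgroup (incl_mem_pairSubgroup hu)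
  rwa [swap_castSucc_last_apply, Equiv.swap_apply_left, rho_inv] at h

theorem commute_incl_incl_of_mem_ker {ι : UVB n →* Equiv.Perm (Fin n)} (hι : IsIota n ι)
    {β : UVB n} (hβ : β ∈ ι.ker) {j : Fin n} {p : UVB (n + 2)}
    (hp : p ∈ pairSubgroup j.castSucc.castSucc (Fin.last (n + 1))) :
    Commute (incl (n + 1) (incl n β)) p := by
  have hρ := realizes_rho (i := (Fin.last n).castSucc) (j := Fin.last (n + 1)) rfl
  have h (k l : Fin (n + 1)) (hkl : lamFin k l ∈ pairSubgroup j.castSucc (Fin.last n)) :=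
    commute_transport (commute_rho_succ_incl_incl β) (hρ k.castSucc l.castSucc) <| by
      rw [← incl_lamFin]
      exact (commute_incl_of_mem_ker hι hβ hkl).map (incl (n + 1))
  have h₁ := h j.castSucc (Fin.last n) (lamFin_mem_pairSubgroup _ _)
  have h₂ := h (Fin.last n) j.castSucc (lamFin_swap_mem_pairSubgroup _ _)
  rw [swap_castSucc_last_apply, Equiv.swap_apply_left] at h₁ h₂
  exact commute_of_mem_pairSubgroup h₁ h₂ hp

theorem isConj_of_realizes {w p q x : UVB n} {π : Equiv.Perm (Fin n)} {a b c d : Fin n}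
    (hw : Realizes w π) (had : π a = d) (hda : π d = a) (hbc : π b = c) (hcb : π c = b)
    (hne : s(a, c) ≠ s(b, d)) (hp : p ∈ pairSubgroup a c) (hq : q ∈ pairSubgroup a c)
    (hxq : Commute x q) (hx : ∀ y ∈ pairSubgroup b d, Commute x y) :
    IsConj (p * x * w) (q⁻¹ * p * q * x * w) := by
  have hm : w * q * w⁻¹ ∈ pairSubgroup b d := by
    have h := hw.conj_mem_pairSubgroup hq
    rwa [had, hcb, pairSubgroup_comm] at h
  have hsq {k l : Fin n} (hk : π (π k) = k) (hl : π (π l) = l) :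
      Commute (w * w) (lamFin k l) := by
    have h := (hw (π k) (π l)).mul_left (hw k l)
    rwa [hk, hl] at h
  have ha : π (π a) = a := by rw [had, hda]
  have hc : π (π c) = c := by rw [hcb, hbc]
  have hwwq : Commute (w * w) q := commute_of_mem_pairSubgroup (hsq ha hc) (hsq hc ha) hq
  have hwq : SemiconjBy w q (w * q * w⁻¹) := (inv_mul_cancel_right _ _).symm
  have hwm : SemiconjBy w (w * q * w⁻¹) q := by
    rw [SemiconjBy, ← mul_assoc, ← mul_assoc, hwwq.eq, mul_assoc, mul_inv_cancel_right]
  exact isConj_mul_mul_of_semiconjBy hwq hwm hxq (hx _ hm) (commute_pairSubgroup hne hp hm)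
    (commute_pairSubgroup hne hq hm)

theorem markov_mul_incl_incl (β u : UVB n) (r : UVB (n + 1)) :
    Markov ⟨n, β * u⟩ ⟨n + 2, incl (n + 1) (rho (n + 1) n * incl n u * rho (n + 1) n) *
      incl (n + 1) (incl n β) * (rho (n + 2) n *
        (incl (n + 1) r * rho (n + 2) (n + 1) * (incl (n + 1) r)⁻¹))⟩ := by
  have h := (Markov.rho_conj_mul_mul_rho β u).trans (Markov.mul_conj_rho _ r)
  rwa [map_mul (incl (n + 1)) _ (rho (n + 1) n), map_mul (incl (n + 1)) _ (incl n β),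
    incl_rho (Nat.lt_succ_self n), mul_assoc _ (rho (n + 2) n)] at h

theorem markov_mul_conj {ι : UVB (n + 1) →* Equiv.Perm (Fin (n + 1))} (hι : IsIota (n + 1) ι)
    {β u v : UVB (n + 1)} (hβ : β ∈ ι.ker) {i : Fin n}
    (hu : u ∈ pairSubgroup i.castSucc (Fin.last n))
    (hv : v ∈ pairSubgroup i.castSucc (Fin.last n)) :
    Markov ⟨n + 1, β * u⟩ ⟨n + 1, β * (v⁻¹ * u * v)⟩ := by
  let a : Fin (n + 3) := i.castSucc.castSucc.castSucc
  let b : Fin (n + 3) := (Fin.last n).castSucc.castSucc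
  let c : Fin (n + 3) := (Fin.last (n + 1)).castSucc
  let d : Fin (n + 3) := Fin.last (n + 2)
  have hnodup : [a, b, c, d].Nodup := by
    simp [a, b, c, d, Fin.castSucc_ne_last]
  obtain ⟨had, hda, hbc, hcb⟩ := swap_mul_swap_apply hnodup
  have hne : s(a, c) ≠ s(b, d) := by
    simp [a, b, c, d, Fin.castSucc_ne_last]
  obtain ⟨r, hr⟩ := exists_realizes_conj_rho i.castSucc.castSucc
  have hρ : Realizes (rho (n + 3) (n + 1)) (Equiv.swap b c) := realizes_rho (j := c) rfl
  have hp := rho_conj_incl_mem_pairSubgroup hu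
  have hq := rho_conj_incl_mem_pairSubgroup hv
  have hxq := (commute_incl_of_mem_ker hι hβ hq).map (incl (n + 2))
  have hx (y : UVB (n + 3)) (hy : y ∈ pairSubgroup b d) :
      Commute (incl (n + 2) (incl (n + 1) β)) y :=
    commute_incl_incl_of_mem_ker hι hβ hy
  have hconj := isConj_of_realizes (hρ.mul hr) had hda hbc hcb hne (incl_mem_pairSubgroup hp)
    (incl_mem_pairSubgroup hq) hxq hx
  have huv := markov_mul_incl_incl β (v⁻¹ * u * v) r
  rw [map_mul (incl (n + 1)), map_mul (incl (n + 1)), map_inv,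
    rho_mul_conj_mul_rho, map_mul, map_mul, map_inv] at huv
  exact (markov_mul_incl_incl β u r).trans ((Markov.of_isConj hconj).trans huv.symm)

end Commutator

end UVB

/-! ## Statement 8 -/

/-- Lemma 4 of the paper.  For `n ≥ 2`, `α ∈ UVP n` and
`u, v ∈ ⟨λ_{n−1,n}, λ_{n,n−1}⟩`, the braids α and α·[u,v] are fused Markov
equivalent, where [u,v] = u⁻¹v⁻¹uv. -/
theorem statement8 (n : ℕ) (hn : 2 ≤ n)
    (ι : UVB n →* Equiv.Perm (Fin n)) (hι : IsIota n ι)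
    (α : UVB n) (hα : α ∈ ι.ker) (u v : UVB n)
    (hu : u ∈ Subgroup.closure {UVB.lam n (n - 1) n, UVB.lam n n (n - 1)})
    (hv : v ∈ Subgroup.closure {UVB.lam n (n - 1) n, UVB.lam n n (n - 1)}) :
    Markov ⟨n, α⟩ ⟨n, α * (u⁻¹ * v⁻¹ * u * v)⟩ := by
  obtain ⟨m, rfl⟩ : ∃ m, n = m + 2 := ⟨n - 2, by omega⟩
  change u ∈ UVB.pairSubgroup (Fin.last m).castSucc (Fin.last (m + 1)) at hu
  change v ∈ UVB.pairSubgroup (Fin.last m).castSucc (Fin.last (m + 1)) at hv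
  have hβ : α * u⁻¹ ∈ ι.ker := mul_mem hα (inv_mem (UVB.pairSubgroup_le_ker hι rfl hu))
  have h := UVB.markov_mul_conj hι hβ hu hv
  rwa [inv_mul_cancel_right, mul_assoc, ← mul_assoc u⁻¹, ← mul_assoc u⁻¹] at h
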